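/- arXiv:2104.04730 — 7 statements merged into one kernel-verified Lean document; each statement's English description precedes it below -/
import Mathlib

section
/- Under the frame setting, the measure φ_{E,W} is absolutely continuous with respect to ℒⁿ: for every Borel set B ⊂ ℝⁿ with ℒⁿ(B) = 0 one has ∫_E ℋ^m(B ∩ W(x)) dℒⁿ(x) = 0. -/
open MeasureTheory Metric Filter
open scoped ENNReal NNReal RealInnerProductSpace Topology

noncomputable section

abbrev En (n : ℕ) : Type := EuclideanSpace ℝ (Fin n)

def projCLM {n : ℕ} (W : Submodule ℝ (En n)) : En n →L[ℝ] En n :=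
  W.subtypeL.comp (Submodule.orthogonalProjectionOnto W)

def spanW {n m : ℕ} (w : Fin m → En n → En n) (x : En n) : Submodule ℝ (En n) :=
  Submodule.span ℝ (Set.range fun i => w i x)

def affW {n m : ℕ} (w : Fin m → En n → En n) (x : En n) : Set (En n) :=
  {y | y - x ∈ spanW w x}

def gMap {n k : ℕ} (v : Fin k → En n → En n) (u : En n) (x : En n) : En k :=
  (WithLp.equiv 2 (Fin k → ℝ)).symm fun i => ⟪v i x, x - u⟫

def unitBallVol (m : ℕ) : ℝ≥0∞ := volume (ball (0 : En m) 1)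

def phiEW (n m : ℕ) (E : Set (En n)) (w : Fin m → En n → En n) (B : Set (En n)) : ℝ≥0∞ :=
  ∫⁻ x in E, μH[(m : ℝ)] (B ∩ affW w x) ∂volume

def Y0W (n m : ℕ) (E : Set (En n)) (v : Fin (n - m) → En n → En n) (u : En n) : ℝ≥0∞ :=
  μH[(m : ℝ)] (E ∩ {x | gMap v u x = 0})

def YmW (n m : ℕ) (F : Set (En n)) (v : Fin (n - m) → En n → En n) (u : En n) : ℝ≥0∞ :=
  liminf (fun j : ℕ =>
    (∫⁻ y in closedBall (0 : En (n - m)) (1 / (j + 1)),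
        μH[(m : ℝ)] (F ∩ {x | gMap v u x = y}) ∂volume)
      / volume (closedBall (0 : En (n - m)) (1 / (j + 1)))) atTop

def polyball {n m : ℕ} (w : Fin m → En n → En n) (x₀ : En n) (r : ℝ) : Set (En n) :=
  {x | ‖projCLM (spanW w x₀) (x - x₀)‖ ≤ r ∧ ‖projCLM (spanW w x₀)ᗮ (x - x₀)‖ ≤ r}

theorem aux_null_of_image_null {X : Type*} [NormedAddCommGroup X] [NormedSpace ℝ X]
    [FiniteDimensional ℝ X] [MeasurableSpace X] [BorelSpace X] (μ : Measure X)
    [μ.IsAddHaarMeasure] (f : X → X) (f' : X → X →L[ℝ] X) (s : Set X)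
    (hf : ∀ x ∈ s, HasFDerivWithinAt f (f' x) s x) (hdet : ∀ x ∈ s, (f' x).det ≠ 0)
    (h0 : μ (f '' s) = 0) : μ s = 0 := by
  have key : ∀ A : X →L[ℝ] X, ∃ δ : ℝ≥0, δ ≠ 0 ∧ (A.det ≠ 0 → ∀ t : Set X,
      ApproximatesLinearOn f A t δ → μ (f '' t) = 0 → μ t = 0) := by
    intro A
    by_cases hA : A.det = 0
    · exact ⟨1, one_ne_zero, fun h => absurd hA h⟩
    · obtain ⟨c, hc0, hc⟩ : ∃ c : ℝ≥0, 0 < c ∧ (c : ℝ≥0∞) < ENNReal.ofReal |A.det| := by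
        have : (0 : ℝ≥0∞) < ENNReal.ofReal |A.det| := by
          simpa using hA
        obtain ⟨c, h1, h2⟩ := ENNReal.lt_iff_exists_nnreal_btwn.1 this
        exact ⟨c, by exact_mod_cast h1, h2⟩
      obtain ⟨δ, h1, h2⟩ := ((mul_le_addHaar_image_of_lt_det μ A hc).and
        self_mem_nhdsWithin).exists
      refine ⟨δ, (show 0 < δ from h2).ne', fun _ t ht h => ?_⟩
      have := h1 t f ht
      rw [h] at this
      have h3 := nonpos_iff_eq_zero.1 this
      rcases mul_eq_zero.1 h3 with h4 | h4
      · exact absurd (by exact_mod_cast h4) hc0.ne'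
      · exact h4
  choose r hr hr' using key
  obtain ⟨t, A, -, hst, happ, hAf⟩ :=
    exists_closed_cover_approximatesLinearOn_of_hasFDerivWithinAt f s f' hf r hr
  rcases s.eq_empty_or_nonempty with rfl | hne
  · simp
  have hsub : s ⊆ ⋃ k, s ∩ t k := by
    rw [← Set.inter_iUnion]; exact Set.subset_inter le_rfl hst
  refine measure_mono_null hsub (measure_iUnion_null fun k => ?_)
  obtain ⟨y, hy, hyA⟩ := hAf hne k
  refine hr' (A k) (hyA ▸ hdet y hy) _ (happ k) ?_
  exact measure_mono_null (Set.image_mono Set.inter_subset_left) h0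

theorem aux_null_of_lines {m : ℕ} (Z : Set (Fin m → ℝ)) (hZ : MeasurableSet Z)
    (h : ∀ t, volume {s : ℝ | s • t ∈ Z} = 0) : volume Z = 0 := by
  have hQ : MeasurableSet {p : ℝ × (Fin m → ℝ) | p.1 • p.2 ∈ Z} :=
    hZ.preimage (by fun_prop : Measurable fun p : ℝ × (Fin m → ℝ) => p.1 • p.2)
  have h1 : (volume.prod volume : Measure (ℝ × (Fin m → ℝ))) {p | p.1 • p.2 ∈ Z} = 0 := by
    rw [Measure.prod_apply_symm hQ]
    exact (lintegral_congr fun t => h t).trans lintegral_zero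
  have h2 := (Measure.measure_prod_null hQ).1 h1
  have h3 : ∀ᵐ s : ℝ, s ≠ 0 := by simp [ae_iff]
  obtain ⟨s, hs, hs0⟩ := (h2.and h3).exists
  have h4 : volume ((fun t : Fin m → ℝ => s • t) ⁻¹' Z) = 0 := hs
  rw [Measure.addHaar_preimage_smul volume hs0] at h4
  rcases mul_eq_zero.1 h4 with h5 | h5
  · simp [hs0] at h5
  · exact h5

theorem aux_line {X : Type*} [NormedAddCommGroup X] [NormedSpace ℝ X]
    [FiniteDimensional ℝ X] (A : X →L[ℝ] X) :
    volume {s : ℝ | (ContinuousLinearMap.id ℝ X + s • A).det = 0} = 0 := by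
  have hfin : {μ | Module.End.HasEigenvalue (A : X →ₗ[ℝ] X) μ}.Finite :=
    Module.End.finite_hasEigenvalue _
  have hfin2 : ((fun s : ℝ => -s⁻¹) ⁻¹' {μ | Module.End.HasEigenvalue (A : X →ₗ[ℝ] X) μ}).Finite :=
    hfin.preimage (fun a _ b _ hab => by simpa using hab)
  refine (hfin2.union (Set.finite_singleton 0)).measure_zero _ |> measure_mono_null ?_
  intro s hs
  by_cases h0 : s = 0
  · right; exact h0
  left
  have hs' : LinearMap.det ((ContinuousLinearMap.id ℝ X + s • A : X →L[ℝ] X) : X →ₗ[ℝ] X) = 0 := hs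
  have := LinearMap.bot_lt_ker_of_det_eq_zero hs'
  obtain ⟨x, hx, hx0⟩ := (Submodule.ne_bot_iff _).1 this.ne'
  refine Module.End.hasEigenvalue_of_hasEigenvector (x := x) ⟨?_, hx0⟩
  rw [Module.End.mem_eigenspace_iff]
  have hx' : x + s • A x = 0 := hx
  have : s • A x = -x := by rw [eq_neg_iff_add_eq_zero, add_comm]; exact hx'
  show A x = (-s⁻¹) • x
  rw [neg_smul, ← smul_neg, ← this, smul_smul, inv_mul_cancel₀ h0, one_smul]

theorem aux_main {n m : ℕ} (w : Fin m → En n → En n) (K : Fin m → ℝ≥0)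
    (hw : ∀ i, LipschitzWith (K i) (w i))
    (B : Set (En n)) (hB : MeasurableSet B) (hB0 : volume B = 0) :
    ∀ᵐ x : En n, volume {t : Fin m → ℝ | x + ∑ i, t i • w i x ∈ B} = 0 := by
  have hc : ∀ i, Continuous (w i) := fun i => (hw i).continuous
  let J : En n × (Fin m → ℝ) → (En n →L[ℝ] En n) := fun p =>
    ContinuousLinearMap.id ℝ (En n) + ∑ i, p.2 i • fderiv ℝ (w i) p.1
  have hJ : Measurable J := by
    refine measurable_const.add (Finset.measurable_sum _ fun i _ => ?_)
    exact ((measurable_pi_apply i).comp measurable_snd).smul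
      ((measurable_fderiv ℝ (w i)).comp measurable_fst)
  have hdJ : Measurable fun p => (J p).det := ContinuousLinearMap.continuous_det.measurable.comp hJ
  have hG : MeasurableSet {p | (J p).det = 0} := hdJ (measurableSet_singleton 0)
  have hG0 : (volume.prod volume : Measure (En n × (Fin m → ℝ))) {p | (J p).det = 0} = 0 := by
    rw [Measure.measure_prod_null hG]
    refine Eventually.of_forall fun x => ?_
    refine aux_null_of_lines _ (measurable_prodMk_left hG) fun t => ?_
    have := aux_line (∑ i, t i • fderiv ℝ (w i) x)
    simpa [J, Finset.smul_sum, smul_smul] using this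
  have hP : MeasurableSet {p : En n × (Fin m → ℝ) | p.1 + ∑ i, p.2 i • w i p.1 ∈ B} :=
    hB.preimage (Continuous.measurable (by fun_prop))
  have hP0 : (volume.prod volume : Measure (En n × (Fin m → ℝ)))
      {p | p.1 + ∑ i, p.2 i • w i p.1 ∈ B} = 0 := by
    rw [Measure.prod_apply_symm hP]
    rw [Measure.prod_apply_symm hG] at hG0
    rw [lintegral_eq_zero_iff (measurable_measure_prodMk_right hG)] at hG0
    rw [lintegral_eq_zero_iff (measurable_measure_prodMk_right hP)]
    filter_upwards [hG0] with t ht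
    have hdiff : ∀ᵐ x : En n, ∀ i, DifferentiableAt ℝ (w i) x :=
      ae_all_iff.2 fun i => (hw i).ae_differentiableAt
    have hN : volume {x : En n | (∀ i, DifferentiableAt ℝ (w i) x) ∧ (J (x, t)).det ≠ 0 ∧
        x + ∑ i, t i • w i x ∈ B} = 0 := by
      refine aux_null_of_image_null volume (fun x => x + ∑ i, t i • w i x)
        (fun x => J (x, t)) _ ?_ (fun x hx => hx.2.1) (measure_mono_null ?_ hB0)
      · intro x hx
        refine HasFDerivAt.hasFDerivWithinAt ?_
        exact (hasFDerivAt_id x).add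
          (HasFDerivAt.fun_sum fun i _ => (hx.1 i).hasFDerivAt.const_smul (t i))
      · rintro _ ⟨x, hx, rfl⟩
        exact hx.2.2
    refine measure_mono_null ?_ (measure_union_null (measure_union_null hN ht) (ae_iff.1 hdiff))
    intro x hx
    by_cases h1 : ∀ i, DifferentiableAt ℝ (w i) x
    · by_cases h2 : (J (x, t)).det = 0
      · exact Or.inl (Or.inr h2)
      · exact Or.inl (Or.inl ⟨h1, h2, hx⟩)
    · exact Or.inr h1
  exact (Measure.measure_prod_null hP).1 hP0

/-- In the frame setting, the measure `φ_{E,W}` is absolutely continuous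
with respect to Lebesgue measure: `ℒⁿ(B) = 0` implies `∫_E ℋ^m(B ∩ W(x)) dℒⁿ(x) = 0`. -/
theorem absolutelyContinuous_phiEW
    (n m : ℕ) (hm : 1 ≤ m) (hmn : m + 1 ≤ n)
    (E U : Set (En n)) (hE : MeasurableSet E) (hEvol : volume E < ⊤)
    (hU : IsOpen U) (hEU : E ⊆ U)
    (Λ : ℝ≥0) (hΛ : 0 < Λ)
    (w : Fin m → En n → En n) (v : Fin (n - m) → En n → En n)
    (hw : ∀ i, LipschitzOnWith Λ (w i) U)
    (hv : ∀ i, LipschitzOnWith Λ (v i) U)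
    (horth : ∀ x ∈ U, Orthonormal ℝ (Sum.elim (fun i => w i x) (fun i => v i x)))
    (hperp : ∀ x ∈ U, (spanW w x)ᗮ = Submodule.span ℝ (Set.range fun i => v i x))
    (B : Set (En n)) (hB : MeasurableSet B) (hB0 : volume B = 0) :
    phiEW n m E w B = 0 := by
  choose w' hw' hww using fun i => (hw i).extend_finite_dimension
  have hae := aux_main w' _ hw' B hB hB0
  unfold phiEW
  rw [← nonpos_iff_eq_zero]
  refine (setLIntegral_mono_ae' (g := fun _ => 0) hE ?_).trans (by simp)
  filter_upwards [hae] with x hx hxE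
  have hxU := hEU hxE
  let L : (Fin m → ℝ) →ₗ[ℝ] En n := Fintype.linearCombination ℝ (fun i => w' i x)
  let f : (Fin m → ℝ) → En n := fun t => x + L.toContinuousLinearMap t
  have hf : LipschitzWith ‖L.toContinuousLinearMap‖₊ f :=
    LipschitzWith.of_dist_le_mul fun a b => by
      simpa [f] using L.toContinuousLinearMap.lipschitz.dist_le_mul a b
  have hLf : ∀ t, f t = x + ∑ i, t i • w' i x := fun t => rfl
  have hsub : B ∩ affW w x ⊆ f '' {t : Fin m → ℝ | x + ∑ i, t i • w' i x ∈ B} := by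
    rintro y ⟨hyB, hy⟩
    have hy' : y - x ∈ Submodule.span ℝ (Set.range fun i => w i x) := hy
    rw [Submodule.mem_span_range_iff_exists_fun] at hy'
    obtain ⟨c, hc⟩ := hy'
    have hcy : x + ∑ i, c i • w' i x = y := by
      have : ∑ i, c i • w' i x = ∑ i, c i • w i x :=
        Finset.sum_congr rfl fun i _ => by rw [hww i hxU]
      rw [this, hc]; abel
    refine ⟨c, ?_, (hLf c).trans hcy⟩
    show x + ∑ i, c i • w' i x ∈ B
    rw [hcy]; exact hyB
  refine (measure_mono hsub).trans
    ((hf.hausdorffMeasure_image_le (Nat.cast_nonneg m) _).trans ?_)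
  have hvol : (μH[(m : ℝ)] : Measure (Fin m → ℝ)) = volume := by
    simpa using hausdorffMeasure_pi_real (ι := Fin m)
  rw [hvol, hx, mul_zero]
end
end

section
/- Given 0 < ε < 1/3, there exists δ > 0, depending only on n, Λ, ε, with the following property. In the frame setting, if 0 < r < δ, x₀ ∈ U, u ∈ C_W(x₀,r) ⊂ U, |g_u(x₀)| ≤ (1−3ε)·r, and C ⊂ C_{εr} is a closed subset of ℝ^{n−m}, then ℒⁿ(C_W(x₀,r) ∩ g_u^{-1}(C)) ≥ (1/(1+ε)) · α(m) · r^m · ℒ^{n−m}(C). -/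
open MeasureTheory Metric Filter
open scoped ENNReal NNReal RealInnerProductSpace Topology

noncomputable section

lemma lip_vol {k : ℕ} (f : En k → En k) (K : ℝ≥0) (S : Set (En k)) (h : LipschitzOnWith K f S) :
    volume (f '' S) ≤ (K : ℝ≥0∞) ^ k * volume S := by
  have e : (volume : Measure (En k)) = μHE[k] :=
    (EuclideanSpace.euclideanHausdorffMeasure_eq_volume k).symm
  rw [e, MeasureTheory.Measure.euclideanHausdorffMeasure_def, Measure.smul_apply,
    Measure.smul_apply]
  have := h.hausdorffMeasure_image_le (d := (k : ℝ)) (by positivity)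
  rw [ENNReal.rpow_natCast] at this
  simp only [ENNReal.smul_def, smul_eq_mul]
  rw [mul_left_comm]
  gcongr

lemma slice_vol {k : ℕ} (η : ℝ≥0) (hη : η < 1) (r ε : ℝ) (hr : 0 ≤ r) (c : En k)
    (H : En k → En k) (hL : LipschitzOnWith η H (closedBall 0 r))
    (hb : ∀ t ∈ closedBall (0 : En k) r, ‖H t‖ ≤ 2 * ε * r)
    (hc : ‖c‖ ≤ (1 - 3 * ε) * r) (C : Set (En k)) (hC : C ⊆ closedBall 0 (ε * r)) :
    volume C ≤ ((1 + η : ℝ≥0) : ℝ≥0∞) ^ k *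
      volume (closedBall (0 : En k) r ∩ {t | t + c + H t ∈ C}) := by
  have hL2 : LipschitzOnWith (1 + η) (fun t => t + c + H t) (closedBall (0 : En k) r) := by
    refine LipschitzOnWith.add ?_ hL
    have : LipschitzWith 1 (fun t : En k => t + c) := by
      refine LipschitzWith.of_dist_le_mul fun x y => ?_
      simp
    exact this.lipschitzOnWith
  refine le_trans (measure_mono ?_) (lip_vol _ (1 + η) _ (hL2.mono Set.inter_subset_left))
  intro y hy
  have hyn : ‖y‖ ≤ ε * r := by simpa using hC hy
  set f : En k → En k := fun t => y - c - H t with hf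
  have hmaps : Set.MapsTo f (closedBall 0 r) (closedBall 0 r) := by
    intro t ht
    rw [mem_closedBall_zero_iff]
    have h1 := norm_sub_le (y - c) (H t)
    have h2 := norm_sub_le y c
    have h3 := hb t ht
    show ‖y - c - H t‖ ≤ r
    linarith
  have hcon : ContractingWith η (hmaps.restrict f (closedBall 0 r) (closedBall 0 r)) := by
    refine ⟨hη, LipschitzWith.of_dist_le_mul fun x y' => ?_⟩
    have := hL.dist_le_mul x.1 x.2 y'.1 y'.2
    have e : dist (f x.1) (f y'.1) = dist (H x.1) (H y'.1) := by
      simp only [hf, dist_sub_left]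
    show dist (f x.1) (f y'.1) ≤ η * dist x.1 y'.1
    rw [e]
    exact this
  obtain ⟨t, ht, hfix, -⟩ := hcon.exists_fixedPoint' isClosed_closedBall.isComplete hmaps
    (x := 0) (by simpa using hr) (edist_ne_top _ _)
  have hfix' : y - c - H t = t := hfix
  have hy' : t + c + H t = y := by
    nth_rewrite 1 [← hfix']
    abel
  exact ⟨t, ⟨ht, by simpa [hy'] using hy⟩, hy'⟩

def lc {n k : ℕ} (a : Fin k → En n) (s : En k) : En n := ∑ i, s i • a i

lemma lc_sub {n k : ℕ} (a : Fin k → En n) (s t : En k) : lc a s - lc a t = lc a (s - t) := by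
  simp [lc, sub_smul, Finset.sum_sub_distrib]

lemma lc_norm {n k : ℕ} (a : Fin k → En n) (ha : Orthonormal ℝ a) (s : En k) :
    ‖lc a s‖ = ‖s‖ := by
  have h : ‖lc a s‖ ^ 2 = ‖s‖ ^ 2 := by
    rw [← real_inner_self_eq_norm_sq, lc, ha.inner_sum, EuclideanSpace.real_norm_sq_eq]
    simp [sq]
  exact (sq_eq_sq₀ (norm_nonneg _) (norm_nonneg _)).1 h

lemma lc_mp {n m k : ℕ} (hn : m + k = n) (a : Fin m → En n) (b : Fin k → En n)
    (h : Orthonormal ℝ (Sum.elim a b)) :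
    MeasurePreserving (fun p : En m × En k => lc a p.1 + lc b p.2)
      (volume.prod volume) volume := by
  have hcard : Fintype.card (Fin m ⊕ Fin k) = Module.finrank ℝ (En n) := by simp [hn]
  have hsp : ⊤ ≤ Submodule.span ℝ (Set.range (Sum.elim a b)) := by
    rw [h.linearIndependent.span_eq_top_of_card_eq_finrank' hcard]
  set B := OrthonormalBasis.mk h hsp with hB
  have h1 := B.measurePreserving_repr_symm
  have h2 := PiLp.volume_preserving_toLp (Fin m ⊕ Fin k)
  have h3 := (volume_measurePreserving_sumPiEquivProdPi (fun _ : Fin m ⊕ Fin k => ℝ)).symm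
  have h4 := (PiLp.volume_preserving_ofLp (Fin m)).prod (PiLp.volume_preserving_ofLp (Fin k))
  have := h1.comp (h2.comp (h3.comp h4))
  convert this using 1
  ext1 p
  simp only [Function.comp]
  rw [← B.sum_repr_symm]
  simp [lc, hB, MeasurableEquiv.sumPiEquivProdPi, Equiv.sumPiEquivProdPi]

lemma norm_le_card {k : ℕ} (x : En k) (M : ℝ) (hM : 0 ≤ M) (h : ∀ i, |x i| ≤ M) :
    ‖x‖ ≤ k * M := by
  rw [← abs_of_nonneg (norm_nonneg x), ← abs_of_nonneg (show 0 ≤ k * M by positivity),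
    ← sq_le_sq, EuclideanSpace.real_norm_sq_eq]
  have h1 : ∑ i, (x i) ^ 2 ≤ ∑ _i : Fin k, M ^ 2 := by
    refine Finset.sum_le_sum fun i _ => ?_
    rw [← sq_abs (x i)]
    have := h i
    gcongr
  rw [Finset.sum_const, Finset.card_univ, Fintype.card_fin, nsmul_eq_mul] at h1
  have h2 : (k : ℝ) ≤ (k : ℝ) ^ 2 := by exact_mod_cast Nat.le_self_pow (by norm_num) k
  nlinarith [sq_nonneg M]

lemma projCLM_eq {n : ℕ} (W : Submodule ℝ (En n)) (x : En n) :
    projCLM W x = W.starProjection x := rfl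

lemma polyball_norm {n m : ℕ} (w : Fin m → En n → En n) (x₀ x : En n) (r : ℝ)
    (h : x ∈ polyball w x₀ r) : ‖x - x₀‖ ≤ 2 * r := by
  obtain ⟨h1, h2⟩ := h
  rw [projCLM_eq] at h1 h2
  have := Submodule.starProjection_add_starProjection_orthogonal (K := spanW w x₀) (x - x₀)
  rw [← this]
  refine (norm_add_le _ _).trans ?_
  linarith

lemma mem_polyball {n m : ℕ} (w : Fin m → En n → En n) (x₀ y z : En n) (r : ℝ)
    (hy : y ∈ spanW w x₀) (hz : z ∈ (spanW w x₀)ᗮ) (hyr : ‖y‖ ≤ r) (hzr : ‖z‖ ≤ r) :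
    x₀ + (y + z) ∈ polyball w x₀ r := by
  have e1 : (spanW w x₀).starProjection (y + z) = y := by
    rw [map_add, Submodule.starProjection_eq_self_iff.2 hy,
      (Submodule.starProjection_apply_eq_zero_iff _).2 hz, add_zero]
  constructor
  · rw [projCLM_eq, add_sub_cancel_left, e1]; exact hyr
  · rw [projCLM_eq, add_sub_cancel_left, Submodule.starProjection_orthogonal_val, e1]
    simpa using hzr

lemma polyball_closed {n m : ℕ} (w : Fin m → En n → En n) (x₀ : En n) (r : ℝ) :
    IsClosed (polyball w x₀ r) := by
  have h : ∀ W : Submodule ℝ (En n), IsClosed {x : En n | ‖projCLM W (x - x₀)‖ ≤ r} :=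
    fun W => isClosed_le (((projCLM W).continuous.comp (continuous_id.sub continuous_const)).norm)
      continuous_const
  exact (h _).inter (h _)

/-- the nonlinear remainder -/
def rem {n k : ℕ} (v : Fin k → En n → En n) (x₀ u x : En n) : En k :=
  WithLp.toLp 2 fun j => ⟪v j x - v j x₀, x - u⟫

lemma rem_bound {n k : ℕ} (Λ : ℝ≥0) (U : Set (En n)) (v : Fin k → En n → En n)
    (hv : ∀ i, LipschitzOnWith Λ (v i) U) (x₀ u x : En n) (hx₀ : x₀ ∈ U) (hx : x ∈ U) (r : ℝ)
    (h1 : ‖x - x₀‖ ≤ 2 * r) (h2 : ‖u - x₀‖ ≤ 2 * r) :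
    ‖rem v x₀ u x‖ ≤ k * (8 * Λ * r * r) := by
  have hr : 0 ≤ r := by linarith [norm_nonneg (x - x₀)]
  refine norm_le_card _ _ (by positivity) fun j => ?_
  have h3 : ‖x - u‖ ≤ 4 * r := by
    have : x - u = (x - x₀) - (u - x₀) := by abel
    rw [this]
    linarith [norm_sub_le (x - x₀) (u - x₀)]
  have h4 := (hv j).norm_sub_le hx hx₀
  have h5 : ‖v j x - v j x₀‖ ≤ Λ * (2 * r) := h4.trans (by gcongr)
  calc |⟪v j x - v j x₀, x - u⟫| ≤ ‖v j x - v j x₀‖ * ‖x - u‖ := abs_real_inner_le_norm _ _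
    _ ≤ (Λ * (2 * r)) * (4 * r) := by gcongr
    _ = _ := by ring

lemma rem_lip {n k : ℕ} (Λ : ℝ≥0) (U : Set (En n)) (v : Fin k → En n → En n)
    (hv : ∀ i, LipschitzOnWith Λ (v i) U) (x₀ u x y : En n) (hx₀ : x₀ ∈ U) (hx : x ∈ U)
    (hy : y ∈ U) (r : ℝ)
    (h1 : ‖x - x₀‖ ≤ 2 * r) (h1y : ‖y - x₀‖ ≤ 2 * r) (h2 : ‖u - x₀‖ ≤ 2 * r) :
    ‖rem v x₀ u x - rem v x₀ u y‖ ≤ k * (8 * Λ * r) * ‖x - y‖ := by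
  have hr : 0 ≤ r := by linarith [norm_nonneg (x - x₀)]
  rw [mul_assoc]
  refine norm_le_card _ _ (by positivity) fun j => ?_
  have h3 : ‖x - u‖ ≤ 4 * r := by
    have : x - u = (x - x₀) - (u - x₀) := by abel
    rw [this]
    linarith [norm_sub_le (x - x₀) (u - x₀)]
  have h4 := (hv j).norm_sub_le hy hx₀
  have h5 : ‖v j y - v j x₀‖ ≤ Λ * (2 * r) := h4.trans (by gcongr)
  have h6 := (hv j).norm_sub_le hx hy
  have e : (rem v x₀ u x - rem v x₀ u y) j =
      ⟪v j x - v j y, x - u⟫ + ⟪v j y - v j x₀, x - y⟫ := by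
    simp only [rem, PiLp.sub_apply, inner_sub_left, inner_sub_right]
    ring
  rw [e]
  have e1 := abs_real_inner_le_norm (v j x - v j y) (x - u)
  have e2 := abs_real_inner_le_norm (v j y - v j x₀) (x - y)
  have e3 : ‖v j x - v j y‖ * ‖x - u‖ ≤ (Λ * ‖x - y‖) * (4 * r) := by gcongr
  have e4 : ‖v j y - v j x₀‖ * ‖x - y‖ ≤ (Λ * (2 * r)) * ‖x - y‖ := by gcongr
  have e5 : 0 ≤ Λ * r * ‖x - y‖ := by positivity
  refine (abs_add_le _ _).trans ?_
  nlinarith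

lemma gMap_eq {n m k : ℕ} (w : Fin m → En n → En n) (v : Fin k → En n → En n) (x₀ u : En n)
    (h : Orthonormal ℝ (Sum.elim (fun i => w i x₀) (fun i => v i x₀))) (s : En m) (t : En k) :
    gMap v u (x₀ + (lc (fun i => w i x₀) s + lc (fun i => v i x₀) t)) =
      t + gMap v u x₀ +
        rem v x₀ u (x₀ + (lc (fun i => w i x₀) s + lc (fun i => v i x₀) t)) := by
  have hv : Orthonormal ℝ (fun i => v i x₀) := by
    simpa [Function.comp_def] using h.comp Sum.inr Sum.inr_injective
  ext j
  have e1 : ⟪v j x₀, lc (fun i => v i x₀) t⟫ = t j := by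
    simpa [lc] using hv.inner_right_fintype t.ofLp j
  have e2 : ⟪v j x₀, lc (fun i => w i x₀) s⟫ = 0 := by
    rw [lc, inner_sum]
    refine Finset.sum_eq_zero fun i _ => ?_
    have := h.2 (show (Sum.inr j : Fin m ⊕ Fin k) ≠ Sum.inl i by simp)
    rw [inner_smul_right]
    simp only [Sum.elim_inl, Sum.elim_inr] at this
    rw [this, mul_zero]
  simp only [gMap, rem, PiLp.add_apply, WithLp.equiv_symm_apply]
  set x := x₀ + (lc (fun i => w i x₀) s + lc (fun i => v i x₀) t) with hx
  have e3 : ⟪v j x₀, x - u⟫ = t j + ⟪v j x₀, x₀ - u⟫ := by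
    have : x - u = (x₀ - u) + (lc (fun i => w i x₀) s + lc (fun i => v i x₀) t) := by
      rw [hx]; abel
    rw [this, inner_add_right, inner_add_right, e1, e2]
    ring
  rw [inner_sub_left, e3]
  ring

lemma exists_eta (n : ℕ) (ε : ℝ) (hε : 0 < ε) :
    ∃ η : ℝ, 0 < η ∧ ∀ x, 0 ≤ x → x ≤ η → (1 + x) ^ n ≤ 1 + ε := by
  have hc : ContinuousAt (fun x : ℝ => (1 + x) ^ n) 0 := by fun_prop
  have := hc.eventually_lt (continuousAt_const (y := 1 + ε)) (by simpa using hε)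
  obtain ⟨a, ha, h⟩ := Metric.eventually_nhds_iff.1 this
  refine ⟨a / 2, by positivity, fun x h0 h1 => le_of_lt (h ?_)⟩
  rw [Real.dist_eq, sub_zero, abs_of_nonneg h0]
  linarith

/-- Lower volume bound for the "nonlinear stripe"
`C_W(x₀,r) ∩ g_u^{-1}(C)`. -/
theorem stripe_volume_lower_bound
    (n : ℕ) (Λ : ℝ≥0) (hΛ : 0 < Λ) (ε : ℝ) (hε0 : 0 < ε) (hε1 : ε < 1 / 3) :
    ∃ δ : ℝ, 0 < δ ∧
      ∀ (m : ℕ), 1 ≤ m → m + 1 ≤ n →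
      ∀ (E U : Set (En n)), MeasurableSet E → volume E < ⊤ → IsOpen U → E ⊆ U →
      ∀ (w : Fin m → En n → En n) (v : Fin (n - m) → En n → En n),
        (∀ i, LipschitzOnWith Λ (w i) U) →
        (∀ i, LipschitzOnWith Λ (v i) U) →
        (∀ x ∈ U, Orthonormal ℝ (Sum.elim (fun i => w i x) (fun i => v i x))) →
        (∀ x ∈ U, (spanW w x)ᗮ = Submodule.span ℝ (Set.range fun i => v i x)) →
        ∀ (r : ℝ) (x₀ u : En n) (C : Set (En (n - m))),
          0 < r → r < δ →
          x₀ ∈ U → u ∈ polyball w x₀ r → polyball w x₀ r ⊆ U →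
          ‖gMap v u x₀‖ ≤ (1 - 3 * ε) * r →
          IsClosed C → C ⊆ closedBall (0 : En (n - m)) (ε * r) →
          ENNReal.ofReal (1 / (1 + ε)) * (unitBallVol m * ENNReal.ofReal (r ^ m) * volume C)
            ≤ volume (polyball w x₀ r ∩ {x | gMap v u x ∈ C}) := by
  obtain ⟨η₀, hη₀, hη₀'⟩ := exists_eta n ε hε0
  set ρ : ℝ := min η₀ (min (2 * ε) (1 / 2)) with hρ
  have hρ0 : 0 < ρ := by positivity
  have hρ1 : ρ ≤ η₀ := min_le_left _ _
  have hρ2 : ρ ≤ 2 * ε := (min_le_right _ _).trans (min_le_left _ _)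
  have hρ3 : ρ ≤ 1 / 2 := (min_le_right _ _).trans (min_le_right _ _)
  refine ⟨ρ / (n * (8 * Λ) + 1), by positivity, ?_⟩
  intro m hm hmn E U _ _ _ _ w v hw hv hon hperp r x₀ u C hr hrδ hx₀ hu hPU hg hC hCb
  have hrρ : n * (8 * Λ * r) ≤ ρ := by
    rw [lt_div_iff₀ (by positivity)] at hrδ
    nlinarith
  have hkn : ((n - m : ℕ) : ℝ) ≤ n := by exact_mod_cast Nat.sub_le n m
  have hkρ : ((n - m : ℕ) : ℝ) * (8 * Λ * r) ≤ ρ :=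
    (mul_le_mul_of_nonneg_right hkn (by positivity)).trans hrρ
  set η : ℝ≥0 := ⟨((n - m : ℕ) : ℝ) * (8 * Λ * r), by positivity⟩ with hη
  have hηv : (η : ℝ) = ((n - m : ℕ) : ℝ) * (8 * Λ * r) := rfl
  have hη1 : η < 1 := by
    rw [← NNReal.coe_lt_coe, hηv, NNReal.coe_one]; linarith
  have hu2 := polyball_norm w x₀ u r hu
  have hon0 := hon x₀ hx₀
  have honv : Orthonormal ℝ (fun i => v i x₀) := by
    simpa [Function.comp_def] using hon0.comp Sum.inr Sum.inr_injective
  have honw : Orthonormal ℝ (fun i => w i x₀) := by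
    simpa [Function.comp_def] using hon0.comp Sum.inl Sum.inl_injective
  set Ψ : En m × En (n - m) → En n :=
    fun p => x₀ + (lc (fun i => w i x₀) p.1 + lc (fun i => v i x₀) p.2) with hΨ
  have hmp : MeasurePreserving Ψ (volume.prod volume) volume :=
    (measurePreserving_add_left volume x₀).comp (lc_mp (by omega) _ _ hon0)
  have hmem : ∀ s t, ‖s‖ ≤ r → ‖t‖ ≤ r → Ψ (s, t) ∈ polyball w x₀ r := by
    intro s t hs ht
    refine mem_polyball w x₀ _ _ r ?_ ?_ ?_ ?_
    · exact Submodule.sum_mem _ fun i _ => Submodule.smul_mem _ _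
        (Submodule.subset_span ⟨i, rfl⟩)
    · rw [hperp x₀ hx₀]
      exact Submodule.sum_mem _ fun i _ => Submodule.smul_mem _ _
        (Submodule.subset_span ⟨i, rfl⟩)
    · rwa [lc_norm _ honw]
    · rwa [lc_norm _ honv]
  set S := polyball w x₀ r ∩ {x | gMap v u x ∈ C} with hS
  have hcont : ContinuousOn (gMap v u) (polyball w x₀ r) := by
    have h1 : ContinuousOn (fun x => fun i => ⟪v i x, x - u⟫) (polyball w x₀ r) := by
      refine continuousOn_pi.2 fun i => ?_
      have := (hv i).continuousOn.mono hPU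
      exact this.inner (by fun_prop)
    exact (PiLp.continuous_toLp 2 _).comp_continuousOn h1
  have hSm : MeasurableSet S :=
    (hcont.preimage_isClosed_of_isClosed (polyball_closed w x₀ r) hC).measurableSet
  have hslice : ∀ s ∈ closedBall (0 : En m) r,
      volume C ≤ ((1 + η : ℝ≥0) : ℝ≥0∞) ^ (n - m) * volume (Prod.mk s ⁻¹' (Ψ ⁻¹' S)) := by
    intro s hs
    rw [mem_closedBall_zero_iff] at hs
    refine (slice_vol η hη1 r ε hr.le (gMap v u x₀) (fun t => rem v x₀ u (Ψ (s, t)))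
      ?_ ?_ hg C hCb).trans ?_
    · refine LipschitzOnWith.of_dist_le_mul fun t ht t' ht' => ?_
      rw [mem_closedBall_zero_iff] at ht ht'
      have m1 := hmem s t hs ht
      have m2 := hmem s t' hs ht'
      have := rem_lip Λ U v hv x₀ u _ _ hx₀ (hPU m1) (hPU m2) r
        (polyball_norm w x₀ _ r m1) (polyball_norm w x₀ _ r m2) hu2
      rw [dist_eq_norm, dist_eq_norm, hηv]
      refine this.trans_eq ?_
      congr 1
      rw [← lc_norm _ honv (t - t'), ← lc_sub]
      congr 1
      simp only [hΨ]
      abel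
    · intro t ht
      rw [mem_closedBall_zero_iff] at ht
      have m1 := hmem s t hs ht
      have := rem_bound Λ U v hv x₀ u _ hx₀ (hPU m1) r (polyball_norm w x₀ _ r m1) hu2
      refine this.trans ?_
      rw [← mul_assoc]
      exact mul_le_mul_of_nonneg_right (hkρ.trans hρ2) hr.le
    · gcongr
      rintro t ⟨ht, ht2⟩
      rw [mem_closedBall_zero_iff] at ht
      refine ⟨hmem s t hs ht, ?_⟩
      show gMap v u (Ψ (s, t)) ∈ C
      rw [hΨ]
      simp only
      rw [gMap_eq w v x₀ u hon0]
      exact ht2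
  have hvol : volume S = ∫⁻ s, volume (Prod.mk s ⁻¹' (Ψ ⁻¹' S)) := by
    rw [← hmp.measure_preimage hSm.nullMeasurableSet,
      Measure.prod_apply (hmp.measurable hSm)]
  have hball : volume (closedBall (0 : En m) r) = unitBallVol m * ENNReal.ofReal (r ^ m) := by
    rw [Measure.addHaar_closedBall _ _ hr.le, unitBallVol, mul_comm]
    simp
  set K : ℝ≥0∞ := ((1 + η : ℝ≥0) : ℝ≥0∞) ^ (n - m) with hK
  have hKε : K ≤ ENNReal.ofReal (1 + ε) := by
    have h1 : ((1 : ℝ) + η) ^ (n - m) ≤ 1 + ε := by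
      refine (pow_le_pow_right₀ ?_ (Nat.sub_le n m)).trans
        (hη₀' η η.2 ((hηv.le.trans hkρ).trans hρ1))
      linarith [η.2]
    rw [hK, ← ENNReal.coe_pow, ← ENNReal.ofReal_coe_nnreal]
    refine ENNReal.ofReal_le_ofReal ?_
    push_cast
    exact h1
  have hmain : volume (closedBall (0 : En m) r) * volume C ≤ K * volume S := by
    calc volume (closedBall (0 : En m) r) * volume C
        = ∫⁻ _s in closedBall (0 : En m) r, volume C := by
          rw [setLIntegral_const, mul_comm]
      _ ≤ ∫⁻ s in closedBall (0 : En m) r, K * volume (Prod.mk s ⁻¹' (Ψ ⁻¹' S)) :=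
          setLIntegral_mono' isClosed_closedBall.measurableSet hslice
      _ ≤ ∫⁻ s, K * volume (Prod.mk s ⁻¹' (Ψ ⁻¹' S)) := setLIntegral_le_lintegral _ _
      _ = K * volume S := by
          rw [lintegral_const_mul _ (measurable_measure_prodMk_left (hmp.measurable hSm)), hvol]
  rw [← hball]
  calc ENNReal.ofReal (1 / (1 + ε)) * (volume (closedBall (0 : En m) r) * volume C)
      ≤ ENNReal.ofReal (1 / (1 + ε)) * (ENNReal.ofReal (1 + ε) * volume S) := by
        exact mul_le_mul_right (hmain.trans (mul_le_mul_left hKε _)) _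
    _ = volume S := by
        rw [← mul_assoc, ← ENNReal.ofReal_mul (by positivity), one_div,
          inv_mul_cancel₀ (by positivity), ENNReal.ofReal_one, one_mul]
end
end

section
/- There exists δ > 0, depending only on n and Λ, with the following property. In the frame setting, if diam E ≤ δ, then 𝒵_E W(u) > 0 for ℒⁿ-almost every u ∈ E. -/
open MeasureTheory Metric Filter
open scoped ENNReal NNReal RealInnerProductSpace Topology

noncomputable section

theorem vol_le_hausdorff_affW {n m : ℕ} (w : Fin m → En n → En n) (x : En n)
    (ho : Orthonormal ℝ (fun i => w i x)) (B : Set (En n)) :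
    volume {t : Fin m → ℝ | x + ∑ i, t i • w i x ∈ B} ≤ μH[(m : ℝ)] (B ∩ affW w x) := by
  classical
  let f : En n → (Fin m → ℝ) := fun y i => ⟪w i x, y - x⟫
  have hf : LipschitzWith 1 f := by
    refine LipschitzWith.of_dist_le_mul fun y z => ?_
    rw [NNReal.coe_one, one_mul, dist_pi_le_iff dist_nonneg]
    intro i
    rw [Real.dist_eq, dist_eq_norm]
    have h1 : f y i - f z i = ⟪w i x, y - z⟫ := by
      simp only [f]
      rw [← inner_sub_right]
      congr 1
      abel
    rw [h1]
    refine (abs_real_inner_le_norm _ _).trans ?_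
    rw [ho.1 i, one_mul]
  have hsub : {t : Fin m → ℝ | x + ∑ i, t i • w i x ∈ B} ⊆ f '' (B ∩ affW w x) := by
    intro t ht
    refine ⟨x + ∑ i, t i • w i x, ⟨ht, ?_⟩, ?_⟩
    · change x + ∑ i, t i • w i x - x ∈ spanW w x
      rw [add_sub_cancel_left]
      exact Submodule.sum_mem _ fun i _ => Submodule.smul_mem _ _ (Submodule.subset_span ⟨i, rfl⟩)
    · funext i
      simp only [f]
      rw [add_sub_cancel_left]
      exact ho.inner_right_fintype t i
  have h2 := hf.hausdorffMeasure_image_le (d := (m : ℝ)) (Nat.cast_nonneg m) (B ∩ affW w x)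
  have h3 : (μH[(m : ℝ)] : Measure (Fin m → ℝ)) = volume := by
    simpa using hausdorffMeasure_pi_real (ι := Fin m)
  rw [h3] at h2
  refine (measure_mono hsub).trans (h2.trans ?_)
  simp

theorem phi_pos {n m : ℕ} (Λ : ℝ≥0) (K : Set (En n)) (hK : IsCompact K) (hK0 : volume K ≠ 0)
    (w : Fin m → En n → En n) (hw : ∀ i, LipschitzOnWith Λ (w i) K)
    (ho : ∀ x ∈ K, Orthonormal ℝ (fun i => w i x)) : phiEW n m K w K ≠ 0 := by
  classical
  intro h0
  have hKm := hK.measurableSet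
  let g : Fin m → En n → En n := fun i => K.indicator (w i)
  have hg : ∀ i, Measurable (g i) := fun i => by
    have := (hw i).continuousOn.measurable_piecewise (continuousOn_const (c := (0 : En n)) (s := Kᶜ)) hKm
    have e : K.piecewise (w i) (fun _ => (0 : En n)) = g i := by
      funext x
      by_cases hx : x ∈ K <;> simp [g, hx]
    rwa [e] at this
  have hgK : ∀ x ∈ K, ∀ i, g i x = w i x := fun x hx i => Set.indicator_of_mem hx _
  let T : Set (En n × (Fin m → ℝ)) := {p | p.1 + ∑ i, p.2 i • g i p.1 ∈ K}
  have hT : MeasurableSet T := by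
    have : Measurable fun p : En n × (Fin m → ℝ) => p.1 + ∑ i, p.2 i • g i p.1 := by
      refine measurable_fst.add (Finset.measurable_sum _ fun i _ => ?_)
      exact ((measurable_pi_apply i).comp measurable_snd).smul ((hg i).comp measurable_fst)
    exact this hKm
  have hT0 : ((volume.restrict K).prod (volume : Measure (Fin m → ℝ))) T = 0 := by
    rw [Measure.prod_apply hT]
    refine le_antisymm ?_ (zero_le)
    rw [← h0]
    refine setLIntegral_mono' hKm fun x hx => ?_
    refine le_trans (le_of_eq ?_) (vol_le_hausdorff_affW w x (ho x hx) K)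
    congr 1
    ext t
    simp [T, hgK x hx]
  have hae : ∀ᵐ t : Fin m → ℝ, volume (K ∩ {x | (x, t) ∈ T}) = 0 := by
    rw [Measure.prod_apply_symm hT,
      lintegral_eq_zero_iff (measurable_measure_prodMk_right hT)] at hT0
    filter_upwards [hT0] with t ht
    have ht' : (volume.restrict K) ((fun x => (x, t)) ⁻¹' T) = 0 := ht
    rw [Measure.restrict_apply (measurable_prodMk_right hT), Set.inter_comm] at ht'
    exact ht'
  -- neighbourhood of K
  have hfin : volume K ≠ ⊤ := hK.measure_lt_top.ne
  obtain ⟨V, hKV, hV, hVlt⟩ : ∃ V ⊇ K, IsOpen V ∧ volume V < volume K + volume K / 2 :=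
    K.exists_isOpen_lt_of_lt _ (ENNReal.lt_add_right hfin (by simpa using hK0))
  obtain ⟨ε, hε, hεV⟩ := hK.exists_thickening_subset_open hV hKV
  have hdet := mul_le_addHaar_image_of_lt_det (volume : Measure (En n))
    (ContinuousLinearMap.id ℝ (En n)) (m := (1/2 : ℝ≥0)) (by
      have hd : (ContinuousLinearMap.id ℝ (En n)).det = 1 := LinearMap.det_id
      rw [hd]
      simp)
  obtain ⟨c, hc, hc0⟩ := (hdet.and self_mem_nhdsWithin).exists
  replace hc0 : 0 < c := hc0
  -- choice of t
  obtain ⟨r, hr0, hr1, hr2⟩ : ∃ r : ℝ, 0 < r ∧ m * r < ε ∧ m * r * Λ ≤ c := by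
    have hc0' : (0 : ℝ) < c := hc0
    have h1 : Tendsto (fun r : ℝ => m * r) (𝓝[>] 0) (𝓝 0) := by
      have : Continuous fun r : ℝ => m * r := by fun_prop
      simpa using (this.tendsto 0).mono_left nhdsWithin_le_nhds
    have h2 : Tendsto (fun r : ℝ => m * r * Λ) (𝓝[>] 0) (𝓝 0) := by
      simpa using h1.mul_const (Λ : ℝ)
    obtain ⟨r, ⟨ha, hb⟩, hd⟩ := (((h1.eventually_lt_const hε).and
      (h2.eventually_lt_const hc0')).and self_mem_nhdsWithin).exists
    exact ⟨r, hd, ha, hb.le⟩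
  obtain ⟨t, htb, ht⟩ := (Measure.dense_of_ae hae).exists_mem_open isOpen_ball
    (⟨0, mem_ball_self hr0⟩ : (ball (0 : Fin m → ℝ) r).Nonempty)
  have hti : ∀ i, |t i| ≤ r := by
    intro i
    have : ‖t‖ < r := by simpa using ht
    exact (norm_le_pi_norm t i).trans this.le
  let F : En n → En n := fun x => x + ∑ i, t i • w i x
  let A := K \ {x | (x, t) ∈ T}
  have hA : volume A = volume K := measure_sdiff_null' htb
  have happ : ApproximatesLinearOn F (ContinuousLinearMap.id ℝ (En n)) A c := by
    intro x hx y hy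
    have e : F x - F y - (ContinuousLinearMap.id ℝ (En n)) (x - y)
        = ∑ i, t i • (w i x - w i y) := by
      simp only [F, smul_sub, Finset.sum_sub_distrib, ContinuousLinearMap.id_apply]
      abel
    rw [e, ← dist_eq_norm x y]
    calc ‖∑ i, t i • (w i x - w i y)‖ ≤ ∑ i : Fin m, r * (Λ * dist x y) := by
          refine norm_sum_le_of_le _ fun i _ => ?_
          rw [norm_smul, ← dist_eq_norm]
          exact mul_le_mul (hti i) ((hw i).dist_le_mul x hx.1 y hy.1) dist_nonneg hr0.le
      _ = m * r * Λ * dist x y := by simp; ring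
      _ ≤ c * dist x y := by gcongr
  have hlow := hc A F happ
  rw [hA] at hlow
  have hFA : F '' A ⊆ V := by
    rintro _ ⟨x, hx, rfl⟩
    refine hεV (mem_thickening_iff.2 ⟨x, hx.1, ?_⟩)
    rw [dist_eq_norm]
    simp only [F, add_sub_cancel_left]
    refine lt_of_le_of_lt (b := ∑ i : Fin m, r) (norm_sum_le_of_le _ fun i _ => ?_) (by simpa using hr1)
    rw [norm_smul, (ho x hx.1).1 i, mul_one]
    exact hti i
  have hdisj : Disjoint (F '' A) K := by
    rw [Set.disjoint_left]
    rintro _ ⟨x, hx, rfl⟩ hk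
    apply hx.2
    simpa [T, hgK x hx.1] using hk
  have hsum : volume (F '' A) + volume K ≤ volume V := by
    rw [← measure_union hdisj hKm]
    exact measure_mono (Set.union_subset hFA hKV)
  refine absurd hVlt (not_lt.2 (le_trans ?_ hsum))
  rw [add_comm]
  gcongr
  refine le_trans (le_of_eq ?_) hlow
  rw [ENNReal.div_eq_inv_mul]
  congr 1
  simp

/-- Positivity of the Radon–Nikodým derivative `𝒵_E W` a.e. on `E`,
when `diam E` is small. -/
theorem Z_positive
    (n : ℕ) (Λ : ℝ≥0) (hΛ : 0 < Λ) :
    ∃ δ : ℝ, 0 < δ ∧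
      ∀ (m : ℕ), 1 ≤ m → m + 1 ≤ n →
      ∀ (E U : Set (En n)), MeasurableSet E → volume E < ⊤ → IsOpen U → E ⊆ U →
      ∀ (w : Fin m → En n → En n) (v : Fin (n - m) → En n → En n),
        (∀ i, LipschitzOnWith Λ (w i) U) →
        (∀ i, LipschitzOnWith Λ (v i) U) →
        (∀ x ∈ U, Orthonormal ℝ (Sum.elim (fun i => w i x) (fun i => v i x))) →
        (∀ x ∈ U, (spanW w x)ᗮ = Submodule.span ℝ (Set.range fun i => v i x)) →
        ∀ (Z : En n → ℝ≥0∞), Measurable Z →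
          (∀ B : Set (En n), MeasurableSet B → phiEW n m E w B = ∫⁻ u in B, Z u ∂volume) →
          Metric.diam E ≤ δ →
          ∀ᵐ u ∂(volume.restrict E), 0 < Z u := by
  refine ⟨1, one_pos, ?_⟩
  intro m _ _ E U hE _ _ hEU w v hw _ ho _ Z hZ hφ _
  let B := E ∩ {u | Z u = 0}
  have hB : MeasurableSet B := hE.inter (hZ (measurableSet_singleton 0))
  have hφB : phiEW n m E w B = 0 := by
    rw [hφ B hB, setLIntegral_congr_fun hB (g := fun _ => 0) (fun u hu => hu.2)]
    simp
  have hB0 : volume B = 0 := by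
    by_contra hne
    obtain ⟨K, hKB, hK, hKpos⟩ := hB.exists_lt_isCompact (pos_iff_ne_zero.2 hne)
    have hKE : K ⊆ E := hKB.trans Set.inter_subset_left
    refine phi_pos Λ K hK hKpos.ne' w (fun i => (hw i).mono (hKE.trans hEU)) (fun x hx => ?_) ?_
    · exact (ho x (hEU (hKE hx))).comp Sum.inl Sum.inl_injective
    · refine le_antisymm ?_ (zero_le)
      rw [← hφB]
      unfold phiEW
      refine (lintegral_mono_set hKE).trans (lintegral_mono fun x => ?_)
      exact measure_mono (Set.inter_subset_inter_left _ hKB)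
  rw [ae_restrict_iff' hE]
  rw [ae_iff]
  refine measure_mono_null (fun u hu => ?_) hB0
  simp only [Set.mem_ofPred_eq, Classical.not_imp, not_lt, nonpos_iff_eq_zero] at hu
  exact hu
end
end

section
/- Let 1 ≤ q ≤ n−1 be an integer and let v₁,…,v_q be an orthonormal family in ℝⁿ. Then there exists a strictly increasing map λ : {1,…,q} → {1,…,n} such that |det((⟨v_k, e_{λ(j)}⟩)_{j,k=1,…,q})| ≥ binom(n,q)^{−1/2}, where e₁,…,e_n is the canonical basis of ℝⁿ. -/
open MeasureTheory Metric Filter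
open scoped ENNReal NNReal RealInnerProductSpace Topology

noncomputable section

theorem sum_minors_sq {n q : ℕ} (A : Fin n → Fin q → ℝ)
    (hA : ∀ j k, ∑ i, A i j * A i k = if j = k then 1 else 0) :
    ∑ p : Fin q → Fin n, (Matrix.det (Matrix.of fun j k => A (p j) k)) ^ 2 = (q.factorial : ℝ) := by
  have h1 : ∀ p : Fin q → Fin n, (Matrix.det (Matrix.of fun j k => A (p j) k)) ^ 2 =
      ∑ σ : Equiv.Perm (Fin q), ∑ τ : Equiv.Perm (Fin q),
        ((Equiv.Perm.sign σ : ℤ) : ℝ) * ((Equiv.Perm.sign τ : ℤ) : ℝ) *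
          ∏ i, (A (p i) (σ i) * A (p i) (τ i)) := by
    intro p
    rw [← Matrix.det_transpose, sq, Matrix.det_apply', Finset.sum_mul_sum]
    refine Finset.sum_congr rfl fun σ _ => Finset.sum_congr rfl fun τ _ => ?_
    simp only [Matrix.transpose_apply, Matrix.of_apply, Finset.prod_mul_distrib]
    ring
  simp_rw [h1]
  rw [Finset.sum_comm]
  have h2 : ∀ σ : Equiv.Perm (Fin q),
      ∑ p : Fin q → Fin n, ∑ τ : Equiv.Perm (Fin q),
        ((Equiv.Perm.sign σ : ℤ) : ℝ) * ((Equiv.Perm.sign τ : ℤ) : ℝ) *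
          ∏ i, (A (p i) (σ i) * A (p i) (τ i)) = 1 := by
    intro σ
    rw [Finset.sum_comm]
    have h3 : ∀ τ : Equiv.Perm (Fin q), ∑ p : Fin q → Fin n,
        ((Equiv.Perm.sign σ : ℤ) : ℝ) * ((Equiv.Perm.sign τ : ℤ) : ℝ) *
          ∏ i, (A (p i) (σ i) * A (p i) (τ i)) = if σ = τ then 1 else 0 := by
      intro τ
      rw [← Finset.mul_sum]
      have h4 := Finset.prod_univ_sum (fun _ : Fin q => (Finset.univ : Finset (Fin n)))
        (fun i x => A x (σ i) * A x (τ i))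
      rw [Fintype.piFinset_univ] at h4
      rw [← h4]
      simp_rw [hA]
      split_ifs with h
      · subst h
        rcases Int.units_eq_one_or (Equiv.Perm.sign σ) with h | h <;> simp [h]
      · obtain ⟨i, hi⟩ : ∃ i, σ i ≠ τ i := by
          by_contra! hc
          exact h (Equiv.ext hc)
        rw [Finset.prod_eq_zero (Finset.mem_univ i) (by simp [hi]), mul_zero]
    simp_rw [h3]
    simp
  simp_rw [h2]
  simp [Fintype.card_perm]

/-- For an orthonormal family `v₁,…,v_q` in `ℝⁿ`, some `q×q` minor of the
matrix of coordinates has determinant at least `binom(n,q)^{−1/2}` in absolute value. -/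
theorem exists_large_minor
    (n q : ℕ) (hq : 1 ≤ q) (hqn : q + 1 ≤ n)
    (v : Fin q → En n) (hv : Orthonormal ℝ v) :
    ∃ l : Fin q → Fin n, StrictMono l ∧
      (Real.sqrt (n.choose q))⁻¹
        ≤ |Matrix.det (Matrix.of fun j k : Fin q => ⟪v k, EuclideanSpace.single (l j) (1 : ℝ)⟫)| := by
  classical
  set A : Fin n → Fin q → ℝ := fun i k => ⟪v k, EuclideanSpace.single i (1 : ℝ)⟫ with hAdef
  have hAv : ∀ i k, A i k = v k i := by
    intro i k
    simp [hAdef, EuclideanSpace.inner_single_right]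
  have hA : ∀ j k, ∑ i, A i j * A i k = if j = k then 1 else 0 := by
    intro j k
    have := orthonormal_iff_ite.1 hv j k
    rw [← this, PiLp.inner_apply]
    refine Finset.sum_congr rfl fun i _ => ?_
    rw [hAv, hAv]
    simp [mul_comm]
  have hsum := sum_minors_sq A hA
  set D : (Fin q → Fin n) → ℝ := fun p => Matrix.det (Matrix.of fun j k => A (p j) k) with hD
  change ∑ p, D p ^ 2 = _ at hsum
  have hC : (0 : ℝ) < n.choose q := by
    exact_mod_cast Nat.choose_pos (by omega)
  let S : Finset (Fin q → Fin n) := Finset.univ.filter Function.Injective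
  have hS : ∑ p ∈ S, D p ^ 2 = (q.factorial : ℝ) := by
    rw [← hsum]
    refine Finset.sum_subset (Finset.subset_univ _) fun p _ hp => ?_
    have hp' : ¬ Function.Injective p := by simpa [S] using hp
    simp only [Function.Injective, not_forall] at hp'
    obtain ⟨a, b, hab, hne⟩ := hp'
    have : D p = 0 := Matrix.det_zero_of_row_eq hne (by ext k; simp [hab])
    rw [this]; norm_num
  have hcard : S.card = q.factorial * n.choose q := by
    have h1 : S.card = Fintype.card {p : Fin q → Fin n // Function.Injective p} :=
      (Fintype.card_subtype _).symm
    rw [h1, Fintype.card_congr (Equiv.subtypeInjectiveEquivEmbedding _ _),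
      Fintype.card_embedding_eq, Fintype.card_fin, Fintype.card_fin,
      Nat.descFactorial_eq_factorial_mul_choose]
  have hne : S.Nonempty := by
    rw [← Finset.card_pos, hcard]
    exact Nat.mul_pos (Nat.factorial_pos _) (Nat.choose_pos (by omega))
  obtain ⟨p, hpS, hp⟩ : ∃ p ∈ S, ((n.choose q : ℝ))⁻¹ ≤ D p ^ 2 := by
    refine Finset.exists_le_of_sum_le hne ?_
    rw [hS, Finset.sum_const, hcard, nsmul_eq_mul]
    push_cast
    rw [mul_assoc, mul_inv_cancel₀ hC.ne', mul_one]
  have hinj : Function.Injective p := by simpa [S] using hpS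
  refine ⟨p ∘ Tuple.sort p, (Tuple.monotone_sort p).strictMono_of_injective
    (hinj.comp (Tuple.sort p).injective), ?_⟩
  have hperm : |Matrix.det (Matrix.of fun j k : Fin q =>
      ⟪v k, EuclideanSpace.single ((p ∘ Tuple.sort p) j) (1 : ℝ)⟫)| = |D p| := by
    have := Matrix.det_permute (Tuple.sort p) (Matrix.of fun j k => A (p j) k)
    change |Matrix.det ((Matrix.of fun j k => A (p j) k).submatrix (Tuple.sort p) id)| = _
    rw [this, abs_mul]
    rcases Int.units_eq_one_or (Equiv.Perm.sign (Tuple.sort p)) with h | h <;> simp [h, hD]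
  rw [hperm, ← Real.sqrt_inv, ← Real.sqrt_sq_eq_abs]
  exact Real.sqrt_le_sqrt hp
end
end

section
/- Let 1 ≤ m ≤ n−1, let B ⊂ ℝⁿ be Borel measurable, and let u ∈ ℝⁿ. Then the function h_B : V(n,n−m) × ℝ^{n−m} → [0,∞] defined by h_B(ξ, y) = ℋ^m(B ∩ π_{ξ,u}^{-1}{y}) is Borel measurable. -/
open MeasureTheory Metric Filter
open scoped ENNReal NNReal RealInnerProductSpace Topology

noncomputable section

lemma slice_aux (n m : ℕ) (hmn : m + 1 ≤ n) (c : ℝ≥0∞)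
    (hc : (μH[(m : ℝ)] : Measure (En m)) = c • volume)
    (B : Set (En n)) (hB : MeasurableSet B) (u : En n)
    (ξ : Fin (n - m) → En n) (hξ : Orthonormal ℝ ξ) (y : En (n - m)) :
    μH[(m : ℝ)] (B ∩ {x | ∀ i, ⟪ξ i, x - u⟫ = y i}) =
      c * volume {x : En n | (∀ i, ⟪ξ i, x⟫ ∈ Set.Icc (0:ℝ) 1) ∧
        u + (x - ∑ i, ⟪ξ i, x⟫ • ξ i) + ∑ i, y i • ξ i ∈ B} := by
  have hcard : Module.finrank ℝ (En n) = Fintype.card (Fin (n - m) ⊕ Fin m) := by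
    simp; omega
  obtain ⟨b, hb⟩ : ∃ b : OrthonormalBasis (Fin (n - m) ⊕ Fin m) ℝ (En n),
      ∀ i, b (Sum.inl i) = ξ i := by
    have h1 : Orthonormal ℝ ((Set.range (Sum.inl : Fin (n - m) → Fin (n - m) ⊕ Fin m)).restrict
        (Sum.elim ξ (fun _ : Fin m => (0 : En n)))) := by
      have := hξ.comp (fun z : Set.range (Sum.inl : Fin (n - m) → Fin (n - m) ⊕ Fin m) =>
        z.2.choose) (by
          intro a b h
          apply Subtype.ext
          rw [← a.2.choose_spec, ← b.2.choose_spec]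
          exact congrArg _ h)
      convert this using 1
      ext1 z
      obtain ⟨z, i, rfl⟩ := z
      have h2 := Exists.choose_spec (p := fun k : Fin (n - m) =>
        (Sum.inl k : Fin (n - m) ⊕ Fin m) = Sum.inl i) ⟨i, rfl⟩
      have h3 := Sum.inl_injective h2
      simp only [Set.restrict_apply, Sum.elim_inl, Function.comp]
      exact congrArg ξ h3.symm
    obtain ⟨b, hb⟩ := h1.exists_orthonormalBasis_extension_of_card_eq hcard
    exact ⟨b, fun i => by simpa using hb (Sum.inl i) ⟨i, rfl⟩⟩
  set p : En n := u + ∑ i, y i • ξ i with hp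
  let φ : En m → En n := fun z => p + ∑ j, z j • b (Sum.inr j)
  have hφiso : Isometry φ := by
    apply Isometry.of_dist_eq
    intro z w
    have h1 : φ z - φ w = ∑ j, (z j - w j) • b (Sum.inr j) := by
      simp [φ, sub_smul, Finset.sum_sub_distrib]
    have ho : Orthonormal ℝ (fun j => b (Sum.inr j)) :=
      b.orthonormal.comp _ Sum.inr_injective
    have h2 : ‖φ z - φ w‖ ^ 2 = ‖z - w‖ ^ 2 := by
      rw [h1, ← real_inner_self_eq_norm_sq, ho.inner_sum, EuclideanSpace.norm_sq_eq]
      simp [sq_abs, ← sq]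
    rw [dist_eq_norm, dist_eq_norm]
    exact (sq_eq_sq₀ (norm_nonneg _) (norm_nonneg _)).1 h2
  have hinl : ∀ (w : Fin (n - m) → ℝ) (z : Fin m → ℝ) (i),
      ⟪ξ i, ∑ k, w k • ξ k + ∑ j, z j • b (Sum.inr j)⟫ = w i := by
    intro w z i
    rw [inner_add_right, hξ.inner_right_fintype, inner_sum]
    simp [← hb, inner_smul_right, b.inner_eq_ite]
  have hset : B ∩ {x | ∀ i, ⟪ξ i, x - u⟫ = y i} = φ '' (φ ⁻¹' B) := by
    rw [Set.image_preimage_eq_inter_range]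
    congr 1
    ext x
    constructor
    · intro hx
      refine ⟨WithLp.toLp 2 (fun j => ⟪b (Sum.inr j), x - u⟫), ?_⟩
      have h := b.sum_repr' (x - u)
      rw [Fintype.sum_sum_type] at h
      simp only [hb] at h
      simp only [Set.mem_setOf_eq] at hx
      simp only [hx] at h
      simp only [φ, hp]
      rw [add_assoc, h]; abel
    · rintro ⟨z, rfl⟩ i
      have : φ z - u = ∑ k, y k • ξ k + ∑ j, z j • b (Sum.inr j) := by
        simp only [φ, hp]; abel
      rw [this, hinl]
  have hφm : Measurable φ := hφiso.continuous.measurable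
  rw [hset, hφiso.hausdorffMeasure_image (Or.inl (by positivity)), hc]
  simp only [Measure.smul_apply, smul_eq_mul]
  congr 1
  -- measure preserving parametrization
  let e1 := (MeasurableEquiv.sumPiEquivProdPi (fun _ : Fin (n - m) ⊕ Fin m => ℝ)).symm
  have m1 : MeasurePreserving e1 :=
    volume_measurePreserving_sumPiEquivProdPi_symm (fun _ : Fin (n - m) ⊕ Fin m => ℝ)
  have m2 := EuclideanSpace.volume_preserving_symm_measurableEquiv_toLp (Fin (n - m) ⊕ Fin m)
  have m3 := b.measurePreserving_repr_symm
  have m2 := PiLp.volume_preserving_toLp (Fin (n - m) ⊕ Fin m)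
  have m4 := m3.comp (m2.comp m1)
  have m5 := PiLp.volume_preserving_toLp (Fin m)
  have hval : ∀ q : (Fin (n - m) → ℝ) × (Fin m → ℝ),
      b.repr.symm (WithLp.toLp 2 (e1 q)) =
        ∑ k, q.1 k • ξ k + ∑ j, q.2 j • b (Sum.inr j) := by
    intro q
    rw [← b.sum_repr_symm, Fintype.sum_sum_type]
    simp only [hb]
    rfl
  have hms : MeasurableSet {x : En n | (∀ i, ⟪ξ i, x⟫ ∈ Set.Icc (0:ℝ) 1) ∧
        u + (x - ∑ i, ⟪ξ i, x⟫ • ξ i) + ∑ i, y i • ξ i ∈ B} := by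
    apply MeasurableSet.inter
    · change MeasurableSet {x : En n | ∀ i, ⟪ξ i, x⟫ ∈ Set.Icc (0:ℝ) 1}
      rw [Set.ofPred_forall]
      exact MeasurableSet.iInter fun i => measurableSet_Icc.preimage (by fun_prop)
    · exact hB.preimage (by fun_prop)
  rw [← m4.measure_preimage hms.nullMeasurableSet,
    ← m5.measure_preimage (hφm hB).nullMeasurableSet]
  have hpre : (⇑b.repr.symm ∘ WithLp.toLp 2 ∘ ⇑e1) ⁻¹' {x : En n | (∀ i, ⟪ξ i, x⟫ ∈ Set.Icc (0:ℝ) 1) ∧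
        u + (x - ∑ i, ⟪ξ i, x⟫ • ξ i) + ∑ i, y i • ξ i ∈ B} =
      (Set.univ.pi fun _ => Set.Icc (0:ℝ) 1) ×ˢ (WithLp.toLp 2 ⁻¹' (φ ⁻¹' B)) := by
    ext q
    simp only [Set.mem_preimage, Function.comp, hval, Set.mem_setOf_eq, hinl, Set.mem_prod,
      Set.mem_univ_pi, φ, hp]
    refine and_congr Iff.rfl ?_
    have : u + (∑ k, q.1 k • ξ k + ∑ j, q.2 j • b (Sum.inr j) - ∑ k, q.1 k • ξ k) + ∑ i, y i • ξ i
      = u + ∑ i, y i • ξ i + ∑ j, q.2 j • b (Sum.inr j) := by abel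
    rw [this]
  rw [hpre, Measure.volume_eq_prod, Measure.prod_prod, volume_pi_pi]
  simp

/-- For Borel `B ⊆ ℝⁿ` and `u ∈ ℝⁿ`, the function
`(ξ, y) ↦ ℋ^m(B ∩ π_{ξ,u}^{-1}{y})` is Borel measurable on `V(n,n−m) × ℝ^{n−m}`. -/
theorem measurable_slice_hausdorff
    (n m : ℕ) (hm : 1 ≤ m) (hmn : m + 1 ≤ n)
    (B : Set (En n)) (hB : MeasurableSet B) (u : En n) :
    Measurable (fun p : {ξ : Fin (n - m) → En n // Orthonormal ℝ ξ} × En (n - m) =>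
      μH[(m : ℝ)] (B ∩ {x | ∀ i, ⟪(p.1 : Fin (n - m) → En n) i, x - u⟫ = p.2 i})) := by
  haveI : (μH[(m : ℝ)] : Measure (En m)).IsAddHaarMeasure := by
    have := isAddHaarMeasure_hausdorffMeasure (E := En m)
    simpa using this
  obtain ⟨c, hc⟩ : ∃ c : ℝ≥0∞, (μH[(m : ℝ)] : Measure (En m)) = c • volume :=
    ⟨_, Measure.isAddLeftInvariant_eq_smul _ _⟩
  have hfun : (fun p : {ξ : Fin (n - m) → En n // Orthonormal ℝ ξ} × En (n - m) =>
      μH[(m : ℝ)] (B ∩ {x | ∀ i, ⟪(p.1 : Fin (n - m) → En n) i, x - u⟫ = p.2 i})) =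
      fun p => c * volume (Prod.mk p ⁻¹'
        {q : ({ξ : Fin (n - m) → En n // Orthonormal ℝ ξ} × En (n - m)) × En n |
          (∀ i, ⟪q.1.1.1 i, q.2⟫ ∈ Set.Icc (0:ℝ) 1) ∧
        u + (q.2 - ∑ i, ⟪q.1.1.1 i, q.2⟫ • q.1.1.1 i) + ∑ i, q.1.2 i • q.1.1.1 i ∈ B}) := by
    ext p
    exact slice_aux n m hmn c hc B hB u p.1.1 p.1.2 p.2
  rw [hfun]
  refine Measurable.const_mul (measurable_measure_prodMk_left ?_) c
  have hx : ∀ i, Measurable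
      (fun q : ({ξ : Fin (n - m) → En n // Orthonormal ℝ ξ} × En (n - m)) × En n =>
        q.1.1.1 i) := fun i => (measurable_pi_apply i).comp
          (measurable_subtype_coe.comp (measurable_fst.comp measurable_fst))
  apply MeasurableSet.inter
  · change MeasurableSet
      {q : ({ξ : Fin (n - m) → En n // Orthonormal ℝ ξ} × En (n - m)) × En n |
          ∀ i, ⟪q.1.1.1 i, q.2⟫ ∈ Set.Icc (0:ℝ) 1}
    rw [Set.ofPred_forall]
    exact MeasurableSet.iInter fun i =>
      measurableSet_Icc.preimage ((hx i).inner measurable_snd)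
  · refine hB.preimage ?_
    refine (measurable_const.add (measurable_snd.sub ?_)).add ?_
    · exact Finset.measurable_sum _ fun i _ =>
        Measurable.fun_smul ((hx i).inner measurable_snd) (hx i)
    · exact Finset.measurable_sum _ fun i _ => Measurable.fun_smul (by fun_prop) (hx i)
end
end

section
/- Let 1 ≤ m ≤ n−1, let B ⊂ ℝⁿ be compact, let W be an m-dimensional affine subspace of ℝⁿ, and let v₁,…,v_{n−m} be an orthonormal basis of the orthogonal complement of the direction of W. Then the function ℝ^{n−m} → [0,∞), y ↦ ℋ^m(B ∩ (W + Σ_{i=1}^{n−m} yᵢ vᵢ)), is upper semicontinuous. -/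
open MeasureTheory Metric Filter
open scoped ENNReal NNReal RealInnerProductSpace Topology

noncomputable section

/-- For compact `B ⊆ ℝⁿ`, an affine `m`-plane `W = p + W₀` and an
orthonormal basis `v₁,…,v_{n−m}` of `W₀ᗮ`, the function
`y ↦ ℋ^m(B ∩ (W + Σᵢ yᵢ vᵢ))` is upper semicontinuous on `ℝ^{n−m}`. -/
theorem upperSemicontinuous_translated_slices
    (n m : ℕ) (hm : 1 ≤ m) (hmn : m + 1 ≤ n)
    (B : Set (En n)) (hB : IsCompact B)
    (p : En n) (W₀ : Submodule ℝ (En n)) (hrank : Module.finrank ℝ W₀ = m)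
    (v : Fin (n - m) → En n) (hv : Orthonormal ℝ v)
    (hvspan : Submodule.span ℝ (Set.range v) = W₀ᗮ) :
    UpperSemicontinuous (fun y : En (n - m) =>
      μH[(m : ℝ)] (B ∩ {z | z - (p + ∑ i, y i • v i) ∈ W₀})) := by
  set q : En (n - m) → En n := fun y => p + ∑ i, y i • v i with hq
  have hqc : Continuous q := by fun_prop
  haveI : IsFiniteMeasureOnCompacts (μH[(m : ℝ)] : Measure W₀) := by
    rw [← hrank]; infer_instance
  have hiso : ∀ y, Isometry (fun w : W₀ => q y + (w : En n)) := fun y =>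
    (isometry_add_left (q y)).comp isometry_subtype_coe
  have key : ∀ y, μH[(m : ℝ)] (B ∩ {z | z - q y ∈ W₀})
      = μH[(m : ℝ)] ((fun w : W₀ => q y + (w : En n)) ⁻¹' B) := by
    intro y
    rw [(hiso y).hausdorffMeasure_preimage (Or.inl (by positivity))]
    congr 2
    ext z
    simp only [Set.mem_setOf_eq, Set.mem_range]
    constructor
    · intro h
      exact ⟨⟨z - q y, h⟩, by simp⟩
    · rintro ⟨w, rfl⟩
      simp
  change UpperSemicontinuous (fun y => μH[(m : ℝ)] (B ∩ {z | z - q y ∈ W₀}))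
  simp_rw [key]
  intro y₀ c hc
  obtain ⟨U, hSU, hU, hUc⟩ := Set.exists_isOpen_lt_of_lt _ _ hc
  have hC : IsClosed ((fun w : W₀ => (w : En n)) '' Uᶜ) :=
    (Submodule.closed_of_finiteDimensional W₀).isClosedEmbedding_subtypeVal.isClosedMap _
      hU.isClosed_compl
  have hev : ∀ᶠ y in 𝓝 y₀, ∀ z ∈ B, z - q y ∉ (fun w : W₀ => (w : En n)) '' Uᶜ := by
    apply hB.eventually_forall_of_forall_eventually
    intro z hz
    have hcont : Continuous (fun t : En (n - m) × En n => t.2 - q t.1) := by fun_prop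
    refine hcont.continuousAt.eventually (hC.isOpen_compl.mem_nhds ?_)
    rintro ⟨w, hw, hwz⟩
    apply hw
    apply hSU
    have : q y₀ + (w : En n) = z := by
      have h2 : (w : En n) = z - q y₀ := hwz
      rw [h2]; abel
    change q y₀ + (w : En n) ∈ B
    rwa [this]
  filter_upwards [hev] with y hy
  refine lt_of_le_of_lt (measure_mono ?_) hUc
  intro w hw
  by_contra hwU
  exact hy _ hw ⟨w, hwU, by simp⟩
end
end

section
/- Let 1 ≤ m ≤ n−1 and let 𝒱 ⊂ G(n,m) be a nonempty closed set with diam 𝒱 < 1. Then there exists a Lipschitz map Ξ = (Ξ₁,…,Ξ_m) : 𝒱 → V(n,m) such that W = span{Ξ₁(W),…,Ξ_m(W)} for every W ∈ 𝒱. -/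
open MeasureTheory Metric Filter
open scoped ENNReal NNReal RealInnerProductSpace Topology

noncomputable section

open InnerProductSpace

lemma norm_inv_smul_sub_le {E : Type*} [NormedAddCommGroup E] [NormedSpace ℝ E] {c : ℝ}
    (hc : 0 < c) (a b : E) (ha : c ≤ ‖a‖) (hb : c ≤ ‖b‖) :
    ‖(‖a‖⁻¹ • a - ‖b‖⁻¹ • b)‖ ≤ 2 / c * ‖a - b‖ := by
  have ha0 : 0 < ‖a‖ := hc.trans_le ha
  have hb0 : 0 < ‖b‖ := hc.trans_le hb
  have h1 : ‖a‖⁻¹ • a - ‖b‖⁻¹ • b = ‖a‖⁻¹ • (a - b) + (‖a‖⁻¹ - ‖b‖⁻¹) • b := by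
    module
  have h2 : ‖(‖a‖⁻¹ - ‖b‖⁻¹) • b‖ = ‖a‖⁻¹ * |‖b‖ - ‖a‖| := by
    rw [norm_smul, Real.norm_eq_abs]
    have : ‖a‖⁻¹ - ‖b‖⁻¹ = (‖b‖ - ‖a‖) * ‖a‖⁻¹ * ‖b‖⁻¹ := by field_simp
    rw [this, abs_mul, abs_mul, abs_of_pos (inv_pos.2 ha0), abs_of_pos (inv_pos.2 hb0)]
    field_simp
  have h3 : |‖b‖ - ‖a‖| ≤ ‖a - b‖ := by
    rw [norm_sub_rev]; exact abs_norm_sub_norm_le b a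
  have h4 : ‖a‖⁻¹ ≤ c⁻¹ := inv_anti₀ hc ha
  rw [h1]
  refine (norm_add_le _ _).trans ?_
  rw [h2, norm_smul, norm_inv, norm_norm]
  have h5 : ‖a‖⁻¹ * ‖a - b‖ ≤ c⁻¹ * ‖a - b‖ := by gcongr
  have h6 : ‖a‖⁻¹ * |‖b‖ - ‖a‖| ≤ c⁻¹ * ‖a - b‖ := by gcongr
  rw [div_eq_mul_inv]; linarith

lemma norm_proj_sub_le {E : Type*} [NormedAddCommGroup E] [InnerProductSpace ℝ E]
    (u v f g : E) (hu : ‖u‖ = 1) (hv : ‖v‖ = 1) (hf : ‖f‖ ≤ 1) (hg : ‖g‖ ≤ 1) :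
    ‖(⟪u, f⟫_ℝ • u - ⟪v, g⟫_ℝ • v)‖ ≤ 2 * ‖u - v‖ + ‖f - g‖ := by
  have h1 : ⟪u, f⟫_ℝ • u - ⟪v, g⟫_ℝ • v
      = ⟪u - v, f⟫_ℝ • u + ⟪v, f - g⟫_ℝ • u + ⟪v, g⟫_ℝ • (u - v) := by
    rw [inner_sub_left, inner_sub_right]; module
  rw [h1]
  refine (norm_add₃_le).trans ?_
  simp only [norm_smul, hu, mul_one]
  have a1 : ‖⟪u - v, f⟫_ℝ‖ ≤ ‖u - v‖ * 1 := (norm_inner_le_norm _ _).trans (by gcongr)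
  have a2 : ‖⟪v, f - g⟫_ℝ‖ ≤ 1 * ‖f - g‖ := (norm_inner_le_norm _ _).trans (by rw [hv])
  have a3 : ‖⟪v, g⟫_ℝ‖ ≤ 1 * 1 := (norm_inner_le_norm _ _).trans (by rw [hv]; gcongr)
  have a4 : ‖⟪v, g⟫_ℝ‖ * ‖u - v‖ ≤ 1 * 1 * ‖u - v‖ := by gcongr
  linarith

lemma norm_projCLM_le {n : ℕ} (W : Submodule ℝ (En n)) : ‖projCLM W‖ ≤ 1 :=
  W.starProjection_norm_le

open InnerProductSpace in
/-- Lower bound for Gram-Schmidt of the image of an orthonormal family. -/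
lemma gs_lower {n m : ℕ} (e : Fin m → En n) (he : Orthonormal ℝ e) (P : En n →L[ℝ] En n)
    (c : ℝ) (hc : 0 < c)
    (hP : ∀ x ∈ Submodule.span ℝ (Set.range e), c * ‖x‖ ≤ ‖P x‖) (k : Fin m) :
    c ≤ ‖gramSchmidt ℝ (fun i => P (e i)) k‖ := by
  set f : Fin m → En n := fun i => P (e i) with hf
  have hy : ∑ i ∈ Finset.Iio k, (ℝ ∙ gramSchmidt ℝ f i).starProjection (f k)
      ∈ Submodule.span ℝ (f '' Set.Iio k) := by
    rw [← span_gramSchmidt_Iio ℝ f k]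
    refine Submodule.sum_mem _ fun i hi => ?_
    rw [Submodule.starProjection_singleton]
    exact Submodule.smul_mem _ _ (Submodule.subset_span ⟨i, by simpa using hi, rfl⟩)
  have him : f '' Set.Iio k = (P : En n →ₗ[ℝ] En n) '' (e '' Set.Iio k) := by
    rw [Set.image_image]; rfl
  rw [him, Submodule.span_image] at hy
  obtain ⟨z, hz, hzy⟩ := hy
  rw [gramSchmidt_def, ← hzy]
  have hzr : z ∈ Submodule.span ℝ (Set.range e) :=
    Submodule.span_mono (Set.image_subset_range _ _) hz
  have horth : ⟪e k, z⟫_ℝ = 0 := by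
    have : Submodule.span ℝ (e '' Set.Iio k) ≤ (ℝ ∙ e k)ᗮ := by
      rw [Submodule.span_le]
      rintro _ ⟨i, hi, rfl⟩
      rw [SetLike.mem_coe, Submodule.mem_orthogonal_singleton_iff_inner_right]
      exact he.2 (ne_of_gt hi)
    exact (Submodule.mem_orthogonal_singleton_iff_inner_right).1 (this hz)
  have h1 : 1 ≤ ‖e k - z‖ := by
    have h := norm_sub_sq_real (e k) z
    rw [horth, he.1 k] at h
    nlinarith [norm_nonneg (e k - z), norm_nonneg z]
  have h2 := hP (e k - z) (Submodule.sub_mem _ (Submodule.subset_span ⟨k, rfl⟩) hzr)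
  have h3 : f k - (P : En n →ₗ[ℝ] En n) z = P (e k - z) := by
    simp [hf]
  rw [h3]
  nlinarith

/-- A nonempty closed subset `𝒱` of the Grassmannian `G(n,m)` (metrized by
the operator norm distance of orthogonal projections) with `diam 𝒱 < 1` admits a Lipschitzian
orthonormal framing `Ξ : 𝒱 → V(n,m)` with `span{Ξ₁(W),…,Ξ_m(W)} = W` for all `W ∈ 𝒱`. -/
theorem lipschitz_orthonormal_framing
    (n m : ℕ) (hm : 1 ≤ m) (hmn : m + 1 ≤ n)
    (𝒱 : Set (Submodule ℝ (En n))) (hne : 𝒱.Nonempty)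
    (hrank : ∀ W ∈ 𝒱, Module.finrank ℝ W = m)
    (hclosed : IsClosed ((fun W => projCLM W) '' 𝒱))
    (hdiam : Metric.diam ((fun W => projCLM W) '' 𝒱) < 1) :
    ∃ (Ξ : Submodule ℝ (En n) → (Fin m → En n)) (K : ℝ≥0),
      (∀ W ∈ 𝒱, Orthonormal ℝ (Ξ W)) ∧
      (∀ W ∈ 𝒱, Submodule.span ℝ (Set.range (Ξ W)) = W) ∧
      (∀ W ∈ 𝒱, ∀ W' ∈ 𝒱, dist (Ξ W) (Ξ W') ≤ K * ‖projCLM W - projCLM W'‖) := by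
  obtain ⟨W₀, hW₀⟩ := hne
  set d := Metric.diam ((fun W => projCLM W) '' 𝒱) with hd
  have hbdd : Bornology.IsBounded ((fun W : Submodule ℝ (En n) => projCLM W) '' 𝒱) := by
    refine (Metric.isBounded_closedBall (x := (0 : En n →L[ℝ] En n)) (r := 1)).subset ?_
    rintro _ ⟨W, -, rfl⟩
    simpa using norm_projCLM_le W
  have hdist : ∀ W ∈ 𝒱, ‖projCLM W₀ - projCLM W‖ ≤ d := fun W hW => by
    rw [← dist_eq_norm]
    exact Metric.dist_le_diam_of_mem hbdd ⟨W₀, hW₀, rfl⟩ ⟨W, hW, rfl⟩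
  set c : ℝ := 1 - d with hcdef
  have hc : 0 < c := by linarith
  let b : OrthonormalBasis (Fin m) ℝ W₀ :=
    (stdOrthonormalBasis ℝ W₀).reindex (finCongr (hrank W₀ hW₀))
  let e : Fin m → En n := fun i => (b i : En n)
  have he : Orthonormal ℝ e := b.orthonormal.comp_linearIsometry W₀.subtypeₗᵢ
  have heW : Submodule.span ℝ (Set.range e) ≤ W₀ := by
    rw [Submodule.span_le]; rintro _ ⟨i, rfl⟩; exact (b i).2
  have hP : ∀ W ∈ 𝒱, ∀ x ∈ Submodule.span ℝ (Set.range e), c * ‖x‖ ≤ ‖projCLM W x‖ := by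
    intro W hW x hx
    have h0 : projCLM W₀ x = x := Submodule.starProjection_eq_self_iff.2 (heW hx)
    have h1 : ‖(projCLM W₀ - projCLM W) x‖ ≤ d * ‖x‖ :=
      ((projCLM W₀ - projCLM W).le_opNorm x).trans (by gcongr; exact hdist W hW)
    rw [_root_.sub_apply, h0] at h1
    have h2 := norm_sub_norm_le x (projCLM W x)
    rw [hcdef]; linarith
  let f : Submodule ℝ (En n) → Fin m → En n := fun W i => projCLM W (e i)
  have hlow : ∀ W ∈ 𝒱, ∀ k, c ≤ ‖gramSchmidt ℝ (f W) k‖ := fun W hW k =>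
    gs_lower e he (projCLM W) c hc (hP W hW) k
  have hne0 : ∀ W ∈ 𝒱, ∀ k, gramSchmidt ℝ (f W) k ≠ 0 := fun W hW k =>
    norm_pos_iff.1 (hc.trans_le (hlow W hW k))
  have hunit : ∀ W ∈ 𝒱, ∀ k, ‖gramSchmidtNormed ℝ (f W) k‖ = 1 := fun W hW k =>
    norm_smul_inv_norm (hne0 W hW k)
  have horth : ∀ W ∈ 𝒱, Orthonormal ℝ (gramSchmidtNormed ℝ (f W)) := by
    intro W hW
    refine ⟨hunit W hW, fun i j hij => ?_⟩
    simp [gramSchmidtNormed, inner_smul_left, inner_smul_right, gramSchmidt_orthogonal ℝ (f W) hij]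
  have hfnorm : ∀ W i, ‖f W i‖ ≤ 1 := fun W i => by
    refine ((projCLM W).le_opNorm _).trans ?_
    rw [he.1 i, mul_one]; exact norm_projCLM_le W
  have hflip : ∀ W W' i, ‖f W i - f W' i‖ ≤ ‖projCLM W - projCLM W'‖ := fun W W' i => by
    have := (projCLM W - projCLM W').le_opNorm (e i)
    rwa [he.1 i, mul_one] at this
  have hlip : ∀ k : Fin m, ∃ K : ℝ≥0, ∀ W ∈ 𝒱, ∀ W' ∈ 𝒱,
      ‖gramSchmidtNormed ℝ (f W) k - gramSchmidtNormed ℝ (f W') k‖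
        ≤ K * ‖projCLM W - projCLM W'‖ := by
    intro k
    induction k using WellFoundedLT.induction with
    | ind k ih =>
    choose! K hK using ih
    have hform : ∀ W ∈ 𝒱, gramSchmidt ℝ (f W) k = f W k - ∑ i ∈ Finset.Iio k,
        ⟪gramSchmidtNormed ℝ (f W) i, f W k⟫_ℝ • gramSchmidtNormed ℝ (f W) i := by
      intro W hW
      rw [gramSchmidt_def]
      congr 1
      refine Finset.sum_congr rfl fun i _ => ?_
      rw [← Submodule.starProjection_unit_singleton ℝ (hunit W hW i)]
      have : (ℝ ∙ gramSchmidtNormed ℝ (f W) i) = (ℝ ∙ gramSchmidt ℝ (f W) i) := by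
        have := span_gramSchmidtNormed (𝕜 := ℝ) (f W) {i}
        simpa using this
      simp only [this]
    refine ⟨Real.toNNReal (2 / c) * (1 + ∑ i ∈ Finset.Iio k, (2 * K i + 1)), ?_⟩
    intro W hW W' hW'
    refine (norm_inv_smul_sub_le hc _ _ (hlow W hW k) (hlow W' hW' k)).trans ?_
    rw [NNReal.coe_mul, Real.coe_toNNReal _ (by positivity)]
    push_cast
    rw [mul_assoc]
    refine mul_le_mul_of_nonneg_left ?_ (by positivity)
    rw [hform W hW, hform W' hW', sub_sub_sub_comm, ← Finset.sum_sub_distrib]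
    refine (norm_sub_le _ _).trans ?_
    rw [add_mul, one_mul, Finset.sum_mul]
    refine add_le_add (hflip _ _ _) ((norm_sum_le _ _).trans (Finset.sum_le_sum fun i hi => ?_))
    refine (norm_proj_sub_le _ _ _ _ (hunit W hW i) (hunit W' hW' i)
      (hfnorm _ _) (hfnorm _ _)).trans ?_
    have h1 := hK i (by simpa using hi) W hW W' hW'
    have h2 := hflip W W' k
    linarith
  choose K hK using hlip
  refine ⟨fun W => gramSchmidtNormed ℝ (f W), ∑ k, K k, horth, ?_, ?_⟩
  · intro W hW
    refine Submodule.eq_of_le_of_finrank_eq ?_ ?_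
    · rw [span_gramSchmidtNormed_range, span_gramSchmidt, Submodule.span_le]
      rintro _ ⟨i, rfl⟩
      exact W.starProjection_apply_mem (e i)
    · rw [finrank_span_eq_card (horth W hW).linearIndependent, hrank W hW, Fintype.card_fin]
  · intro W hW W' hW'
    refine (dist_pi_le_iff (by positivity)).2 fun k => ?_
    rw [dist_eq_norm]
    refine (hK k W hW W' hW').trans ?_
    gcongr
    exact Finset.single_le_sum (f := K) (fun _ _ => zero_le) (Finset.mem_univ k)
end
end
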